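/- Let V be a finite set, γ ∈ (0,1], and let F be a set function on subsets of V with F(∅) = 0 that is monotone non-decreasing and satisfies ∑_{j∈T} (F(S∪{j}) − F(S)) ≥ γ·(F(S∪T) − F(S)) for all disjoint S, T ⊆ V. Let S* ⊆ V with |S*| = k ≥ 1, and let S_0 = ∅, S_{t+1} = S_t ∪ {j_t} where j_t ∈ V maximizes F(S_t ∪ {j}) − F(S_t) over j ∈ V. Then for every t ≥ 0, F(S*) − F(S_t) ≤ F(S*)·(1 − γ/k)^t ≤ F(S*)·e^{−γ t / k}. -/

import Mathlib

open scoped BigOperators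

/-- Exponential-decay guarantee for greedy maximization of a `γ`-weakly
submodular monotone set function:
`F(S*) − F(S_t) ≤ F(S*)·(1 − γ/k)^t ≤ F(S*)·e^{−γt/k}`. -/
theorem greedy_exponential_decay
    {V : Type*} [Fintype V] [DecidableEq V]
    (γ : ℝ) (hγ0 : 0 < γ) (hγ1 : γ ≤ 1)
    (F : Finset V → ℝ) (hF0 : F ∅ = 0)
    (hmono : ∀ S T : Finset V, S ⊆ T → F S ≤ F T)
    (hweak : ∀ S T : Finset V, Disjoint S T →
      ∑ j ∈ T, (F (S ∪ {j}) - F S) ≥ γ * (F (S ∪ T) - F S))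
    (k : ℕ) (hk : 1 ≤ k) (Sstar : Finset V) (hSstar : Sstar.card = k)
    (Sseq : ℕ → Finset V) (hS0 : Sseq 0 = ∅)
    (hgreedy : ∀ t : ℕ, ∃ j : V, Sseq (t + 1) = Sseq t ∪ {j} ∧
      ∀ j' : V, F (Sseq t ∪ {j'}) - F (Sseq t) ≤ F (Sseq t ∪ {j}) - F (Sseq t)) :
    ∀ t : ℕ,
      F Sstar - F (Sseq t) ≤ F Sstar * (1 - γ / k) ^ t ∧
      F Sstar * (1 - γ / k) ^ t ≤ F Sstar * Real.exp (-(γ * t) / k) := by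
  have hk0 : (0:ℝ) < k := by exact_mod_cast hk
  have hk1 : (1:ℝ) ≤ k := by exact_mod_cast hk
  have hpos : 0 ≤ F Sstar := hF0 ▸ hmono ∅ Sstar (Finset.empty_subset _)
  have hq : 0 ≤ 1 - γ / k := by
    have : γ / k ≤ 1 := (div_le_one hk0).2 (hγ1.trans hk1)
    linarith
  have step : ∀ t, γ / k * (F Sstar - F (Sseq t)) ≤ F (Sseq (t + 1)) - F (Sseq t) := by
    intro t
    obtain ⟨j, hj, hmax⟩ := hgreedy t
    rw [hj]
    have h1 := hweak (Sseq t) (Sstar \ Sseq t) Finset.disjoint_sdiff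
    have h2 : ∑ i ∈ Sstar \ Sseq t, (F (Sseq t ∪ {i}) - F (Sseq t)) ≤
        ((Sstar \ Sseq t).card : ℝ) * (F (Sseq t ∪ {j}) - F (Sseq t)) := by
      rw [← nsmul_eq_mul]
      exact Finset.sum_le_card_nsmul _ _ _ (fun i _ => hmax i)
    have h3 : ((Sstar \ Sseq t).card : ℝ) ≤ k := by
      rw [← hSstar]
      exact_mod_cast Finset.card_le_card Finset.sdiff_subset
    have h4 : 0 ≤ F (Sseq t ∪ {j}) - F (Sseq t) :=
      sub_nonneg.2 (hmono _ _ Finset.subset_union_left)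
    have h5 : F Sstar ≤ F (Sseq t ∪ (Sstar \ Sseq t)) := by
      apply hmono
      rw [Finset.union_sdiff_self_eq_union]
      exact Finset.subset_union_right
    have h6 := mul_le_mul_of_nonneg_right h3 h4
    have h7 : γ * (F Sstar - F (Sseq t)) ≤
        γ * (F (Sseq t ∪ (Sstar \ Sseq t)) - F (Sseq t)) :=
      mul_le_mul_of_nonneg_left (by linarith) hγ0.le
    rw [div_mul_eq_mul_div, div_le_iff₀ hk0]
    linarith
  intro t
  constructor
  · induction t with
    | zero => simp [hS0, hF0]
    | succ t ih =>
      have h := step t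
      have h' := mul_le_mul_of_nonneg_right ih hq
      rw [pow_succ, ← mul_assoc]
      linarith
  · apply mul_le_mul_of_nonneg_left _ hpos
    have h : 1 - γ / k ≤ Real.exp (-(γ / k)) := Real.one_sub_le_exp_neg _
    have h' := pow_le_pow_left₀ hq h t
    rw [← Real.exp_nat_mul] at h'
    convert h' using 2
    ring
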